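/- arXiv:math/0512220 — 4 statements merged into one kernel-verified Lean document; each statement's English description precedes it below -/
import Mathlib

section
/- Let κ be a regular uncountable cardinal, Γ a chain, G = (ℝ^Γ)_κ the κ-bounded Hahn group, and K = ℝ((G))_κ. Every order isomorphism ι : Γ → G^{<0} (where G^{<0} is the chain of strictly negative elements of G) lifts to an isomorphism of ordered groups ι̂ : (G,+) → (Neg(K),+) defined by ι̂(Σ_{γ∈Γ} g_γ 1_γ) = Σ_{γ∈Γ} g_γ t^{ι(γ)}; in particular the right-hand side is a well-defined element of K (its support is well-ordered of cardinality < κ). -/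
open Cardinal

/-- The lexicographic (leading-coefficient) strict order on Hahn series; for the
κ-bounded Hahn group `(ℝ^Γ)_κ` this is the lexicographic order. -/
def hlt {Γ : Type*} [LinearOrder Γ] (f g : HahnSeries Γ ℝ) : Prop :=
  ∃ a, f.coeff a < g.coeff a ∧ ∀ b, b < a → f.coeff b = g.coeff b

/-- The lexicographic strict order on second-level series, i.e. on real-valued
functions on the Hahn group `ℝ^Γ` (ordered by `hlt`). -/
def hlt2 {Γ : Type*} [LinearOrder Γ] (F F' : HahnSeries Γ ℝ → ℝ) : Prop :=
  ∃ a, F a < F' a ∧ ∀ b, hlt b a → F b = F' b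

/-- `Neg(K) = ℝ((G^{<0}))_κ` for `K = ℝ((G))_κ`, `G = (ℝ^Γ)_κ`: real-valued functions
on `G` whose support consists of negative κ-bounded elements, is well-ordered with
respect to the (lexicographic) order of `G`, and has cardinality `< κ`. -/
def NegK (κ : Cardinal) (Γ : Type*) [LinearOrder Γ] : Set (HahnSeries Γ ℝ → ℝ) :=
  {F | (∀ g ∈ Function.support F, #g.support < κ ∧ hlt g 0) ∧
       (Function.support F).WellFoundedOn (hlt (Γ := Γ)) ∧
       #(Function.support F) < κ}

theorem not_hlt_self {Γ : Type*} [LinearOrder Γ] (f : HahnSeries Γ ℝ) : ¬ hlt f f :=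
  fun ⟨_, ha, _⟩ => lt_irrefl _ ha

theorem injective_of_lt_iff_hlt {Γ Δ : Type*} [LinearOrder Γ] [LinearOrder Δ]
    {ι : Δ → HahnSeries Γ ℝ} (hι : ∀ γ γ', γ < γ' ↔ hlt (ι γ) (ι γ')) :
    Function.Injective ι := by
  intro γ γ' h
  rcases lt_trichotomy γ γ' with hlt' | heq | hgt
  · exact absurd (h ▸ (hι γ γ').1 hlt') (not_hlt_self _)
  · exact heq
  · exact absurd (h ▸ (hι γ' γ).1 hgt) (not_hlt_self _)

/-- **Lifting a chain isomorphism to the Hahn group (Main Lemma, first part).**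
Let `κ` be regular uncountable, `Γ` a chain, `G = (ℝ^Γ)_κ` and `K = ℝ((G))_κ`.
Every order isomorphism `ι : Γ → G^{<0}` lifts to an isomorphism of ordered groups
`ι̂ : (G,+) → (Neg(K),+)`, `ι̂(Σ g_γ 1_γ) = Σ g_γ t^{ι(γ)}`; in particular the
right-hand side is a well-defined element of `K` (it lies in `Neg(K)`, i.e. its
support is well-ordered of cardinality `< κ`). -/
theorem lift_chain_iso_to_hahn_group
    (κ : Cardinal) (hreg : κ.IsRegular) (hunc : ℵ₀ < κ)
    (Γ : Type*) [LinearOrder Γ] (ι : Γ → HahnSeries Γ ℝ)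
    (hι₁ : ∀ γ, #(ι γ).support < κ ∧ hlt (ι γ) 0)
    (hι₂ : ∀ γ γ', γ < γ' ↔ hlt (ι γ) (ι γ'))
    (hι₃ : ∀ g : HahnSeries Γ ℝ, #g.support < κ → hlt g 0 → ∃ γ, ι γ = g) :
    ∃ Φ : {g : HahnSeries Γ ℝ // #g.support < κ} → (HahnSeries Γ ℝ → ℝ),
      (∀ g γ, Φ g (ι γ) = g.1.coeff γ) ∧
      (∀ g h, h ∉ Set.range ι → Φ g h = 0) ∧
      (∀ g, Φ g ∈ NegK κ Γ) ∧
      Function.Injective Φ ∧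
      (∀ F ∈ NegK κ Γ, ∃ g, Φ g = F) ∧
      (∀ g g' g'', g.1 + g'.1 = g''.1 → ∀ h, Φ g'' h = Φ g h + Φ g' h) ∧
      (∀ g g', hlt g.1 g'.1 ↔ hlt2 (Φ g) (Φ g')) := by
  have hinj : Function.Injective ι := injective_of_lt_iff_hlt hι₂
  have hext : ∀ (g : HahnSeries Γ ℝ) (γ : Γ),
      Function.extend ι g.coeff 0 (ι γ) = g.coeff γ := fun g γ => hinj.extend_apply _ _ γ
  have hext0 : ∀ (g : HahnSeries Γ ℝ) (h : HahnSeries Γ ℝ), h ∉ Set.range ι →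
      Function.extend ι g.coeff 0 h = 0 := fun g h hh => Function.extend_apply' _ _ h hh
  refine ⟨fun g => Function.extend ι g.1.coeff 0, fun g => hext g.1, fun g => hext0 g.1,
    fun g => ?_, fun g g' hgg' => ?_, fun F hF => ?_, fun g g' g'' hsum h => ?_, fun g g' => ?_⟩
  · have hsupp : Function.support (Function.extend ι g.1.coeff 0) = ι '' g.1.support := by
      ext h
      by_cases hh : h ∈ Set.range ι
      · obtain ⟨γ, rfl⟩ := hh
        simp [hext, hinj.eq_iff]
      · simp only [Function.mem_support, hext0 g.1 h hh, ne_eq, not_true_eq_false, false_iff]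
        exact fun hmem => hh (Set.image_subset_range _ _ hmem)
    refine ⟨?_, ?_, ?_⟩
    · rw [hsupp]
      rintro _ ⟨γ, -, rfl⟩
      exact hι₁ γ
    · rw [hsupp, Set.wellFoundedOn_image]
      exact Set.WellFoundedOn.mono g.1.isWF_support
        (fun γ γ' hlt' => (hι₂ γ γ').2 hlt') le_rfl
    · rw [hsupp]
      exact mk_image_le.trans_lt g.2
  · ext γ
    rw [← hext, ← hext]
    exact congrFun hgg' (ι γ)
  · obtain ⟨hneg, hwf, hcard⟩ := hF
    have himage : ι '' Function.support (F ∘ ι) ⊆ Function.support F := by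
      rintro _ ⟨γ, hγ, rfl⟩
      exact hγ
    have hpwo : (Function.support (F ∘ ι)).IsPWO := by
      refine Set.isPWO_iff_isWF.2 ?_
      exact (Set.wellFoundedOn_image.1 (hwf.subset himage)).mono
        (fun γ γ' hlt' => (hι₂ γ γ').1 hlt') le_rfl
    refine ⟨⟨⟨F ∘ ι, hpwo⟩, ?_⟩, ?_⟩
    · exact ((mk_image_eq hinj).symm.le.trans (mk_le_mk_of_subset himage)).trans_lt hcard
    · funext h
      by_cases hh : h ∈ Set.range ι
      · obtain ⟨γ, rfl⟩ := hh
        exact hext _ γ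
      · refine (hext0 _ h hh).trans ?_
        by_contra hne
        obtain ⟨hc, hn⟩ := hneg h (Ne.symm hne)
        exact hh (hι₃ h hc hn)
  · by_cases hh : h ∈ Set.range ι
    · obtain ⟨γ, rfl⟩ := hh
      simp only [hext, ← hsum, HahnSeries.coeff_add]
    · simp only [hext0 _ h hh, add_zero]
  · constructor
    · rintro ⟨a, ha, hb⟩
      refine ⟨ι a, by simpa only [hext] using ha, fun b hba => ?_⟩
      by_cases hh : b ∈ Set.range ι
      · obtain ⟨γ, rfl⟩ := hh
        simpa only [hext] using hb γ ((hι₂ γ a).2 hba)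
      · simp only [hext0 _ b hh]
    · rintro ⟨a, ha, hb⟩
      by_cases hh : a ∈ Set.range ι
      · obtain ⟨γ, rfl⟩ := hh
        refine ⟨γ, by simpa only [hext] using ha, fun b hbγ => ?_⟩
        simpa only [hext] using hb (ι b) ((hι₂ b γ).1 hbγ)
      · simp only [hext0 _ a hh, lt_irrefl] at ha
end

section
/- For every regular uncountable cardinal κ and every nonempty chain Γ₀, there exists a chain Γ containing Γ₀ as a subchain together with an order isomorphism ι : Γ → G^{<0}, where G = (ℝ^Γ)_κ is the κ-bounded Hahn group over Γ and G^{<0} is its chain of strictly negative elements. (Existence of the κ-th iterated lexicographic power of Γ₀.) -/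
open Cardinal

universe u

/-- `Γ` is a κ-th iterated lexicographic power of `Γ₀`: it contains `Γ₀` as a
subchain and comes with an order isomorphism `ι : Γ → G^{<0}`, where
`G = (ℝ^Γ)_κ` is the κ-bounded Hahn group over `Γ` and `G^{<0}` is its chain of
strictly negative elements. -/
def IsIterLexPower (κ : Cardinal) (Γ₀ Γ : Type*) [LinearOrder Γ₀] [LinearOrder Γ] : Prop :=
  (∃ e : Γ₀ → Γ, StrictMono e) ∧
  ∃ ι : Γ → HahnSeries Γ ℝ,
    (∀ γ, #(ι γ).support < κ ∧ hlt (ι γ) 0) ∧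
    (∀ γ γ', γ < γ' ↔ hlt (ι γ) (ι γ')) ∧
    (∀ g : HahnSeries Γ ℝ, #g.support < κ → hlt g 0 → ∃ γ, ι γ = g)

section LexRelation

variable {U : Type u}

/-- The leading-coefficient comparison of real functions on `U` along a relation `R`. -/
def LexLT (R : U → U → Prop) (f g : U → ℝ) : Prop :=
  ∃ a, f a < g a ∧ ∀ b, R b a → f b = g b

/-- `p.2` is a strict linear order on the set `p.1`. -/
structure IsPartialChain (p : Set U × (U → U → Prop)) : Prop where
  mem_left : ∀ a b, p.2 a b → a ∈ p.1
  mem_right : ∀ a b, p.2 a b → b ∈ p.1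
  irrefl : ∀ a, ¬ p.2 a a
  trans : ∀ a b c, p.2 a b → p.2 b c → p.2 a c
  total : ∀ a ∈ p.1, ∀ b ∈ p.1, p.2 a b ∨ a = b ∨ p.2 b a

/-- `f` is a negative element of the `κ`-bounded Hahn group over `p`, extended by zero to `U`. -/
structure IsNegSeries (κ : Cardinal.{u}) (p : Set U × (U → U → Prop)) (f : U → ℝ) : Prop where
  card_lt : #f.support < κ
  support_subset : f.support ⊆ p.1
  wellFoundedOn : f.support.WellFoundedOn p.2
  neg : LexLT p.2 f 0

/-- The chain of negative elements of the `κ`-bounded Hahn group over `p`, realised inside `U`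
through the coding `c`. -/
def negSeriesChain (κ : Cardinal.{u}) (c : (U → ℝ) → U) (p : Set U × (U → U → Prop)) :
    Set U × (U → U → Prop) :=
  ({x | ∃ f, IsNegSeries κ p f ∧ c f = x},
    fun x y => ∃ f g, IsNegSeries κ p f ∧ IsNegSeries κ p g ∧ c f = x ∧ c g = y ∧ LexLT p.2 f g)

variable {κ : Cardinal.{u}} {c : (U → ℝ) → U} {p q : Set U × (U → U → Prop)} {f g h : U → ℝ}

theorem IsPartialChain.rel_of_le (hp : IsPartialChain p) (hq : IsPartialChain q) (hpq : p ≤ q)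
    {a b : U} (ha : a ∈ p.1) (hb : b ∈ p.1) (hab : q.2 a b) : p.2 a b := by
  rcases hp.total a ha b hb with h | h | h
  · exact h
  · exact absurd (h ▸ hab) (hq.irrefl _)
  · exact absurd (hq.trans _ _ _ hab (hpq.2 _ _ h)) (hq.irrefl _)

theorem LexLT.mono (hp : IsPartialChain p) (hq : IsPartialChain q) (hpq : p ≤ q)
    (hf : f.support ⊆ p.1) (hg : g.support ⊆ p.1) (hfg : LexLT p.2 f g) : LexLT q.2 f g := by
  obtain ⟨a, ha, hlt⟩ := hfg
  have hap : a ∈ p.1 := by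
    by_contra hn
    have h1 : f a = 0 := by_contra fun h => hn (hf h)
    have h2 : g a = 0 := by_contra fun h => hn (hg h)
    simp [h1, h2] at ha
  refine ⟨a, ha, fun b hb => ?_⟩
  by_cases hbp : b ∈ p.1
  · exact hlt b (hp.rel_of_le hq hpq hbp hap hb)
  · have h1 : f b = 0 := by_contra fun h => hbp (hf h)
    have h2 : g b = 0 := by_contra fun h => hbp (hg h)
    rw [h1, h2]

theorem IsNegSeries.mono (hp : IsPartialChain p) (hq : IsPartialChain q) (hpq : p ≤ q)
    (hf : IsNegSeries κ p f) : IsNegSeries κ q f where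
  card_lt := hf.card_lt
  support_subset := hf.support_subset.trans hpq.1
  wellFoundedOn := by
    refine Set.WellFoundedOn.mono' (fun a ha b hb hab => ?_) hf.wellFoundedOn
    exact hp.rel_of_le hq hpq (hf.support_subset ha) (hf.support_subset hb) hab
  neg := hf.neg.mono hp hq hpq hf.support_subset (by simp)

theorem negSeriesChain_mono (hp : IsPartialChain p) (hq : IsPartialChain q) (hpq : p ≤ q) :
    negSeriesChain κ c p ≤ negSeriesChain κ c q := by
  refine ⟨?_, ?_⟩
  · rintro x ⟨f, hf, rfl⟩
    exact ⟨f, hf.mono hp hq hpq, rfl⟩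
  · rintro x y ⟨f, g, hf, hg, hx, hy, hfg⟩
    exact ⟨f, g, hf.mono hp hq hpq, hg.mono hp hq hpq, hx, hy,
      hfg.mono hp hq hpq hf.support_subset hg.support_subset⟩

theorem LexLT.irrefl (R : U → U → Prop) (f : U → ℝ) : ¬ LexLT R f f :=
  fun ⟨_, ha, _⟩ => lt_irrefl _ ha

theorem LexLT.trans (hp : IsPartialChain p) (hf : f.support ⊆ p.1) (hg : g.support ⊆ p.1)
    (hh : h.support ⊆ p.1) (hfg : LexLT p.2 f g) (hgh : LexLT p.2 g h) : LexLT p.2 f h := by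
  have mem : ∀ {f g : U → ℝ}, f.support ⊆ p.1 → g.support ⊆ p.1 → ∀ a, f a < g a → a ∈ p.1 := by
    intro f g hf hg a ha
    by_contra hn
    have h1 : f a = 0 := by_contra fun h => hn (hf h)
    have h2 : g a = 0 := by_contra fun h => hn (hg h)
    simp [h1, h2] at ha
  obtain ⟨a, ha, hal⟩ := hfg
  obtain ⟨b, hb, hbl⟩ := hgh
  rcases hp.total a (mem hf hg a ha) b (mem hg hh b hb) with hab | rfl | hba
  · exact ⟨a, by rwa [← hbl a hab],
      fun d hd => (hal d hd).trans (hbl d (hp.trans _ _ _ hd hab))⟩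
  · exact ⟨a, ha.trans hb, fun d hd => (hal d hd).trans (hbl d hd)⟩
  · exact ⟨b, by rwa [hal b hba],
      fun d hd => (hal d (hp.trans _ _ _ hd hba)).trans (hbl d hd)⟩

theorem IsNegSeries.lexLT_total (hp : IsPartialChain p) (hf : IsNegSeries κ p f)
    (hg : IsNegSeries κ p g) : LexLT p.2 f g ∨ f = g ∨ LexLT p.2 g f := by
  have : IsStrictOrder U p.2 := { irrefl := hp.irrefl, trans := hp.trans }
  by_cases hne : f = g
  · exact Or.inr (Or.inl hne)
  have hsub : {a | f a ≠ g a} ⊆ f.support ∪ g.support := by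
    intro a ha
    by_contra hn
    simp only [Set.mem_union, Function.mem_support, not_or, not_not] at hn
    exact ha (hn.1.trans hn.2.symm)
  have hwf : {a | f a ≠ g a}.WellFoundedOn p.2 :=
    (hf.wellFoundedOn.union hg.wellFoundedOn).subset hsub
  obtain ⟨a₀, ha₀⟩ := Function.ne_iff.mp hne
  obtain ⟨⟨a, ha⟩, -, hmin⟩ := WellFounded.has_min hwf Set.univ ⟨⟨a₀, ha₀⟩, trivial⟩
  have heq : ∀ b, p.2 b a → f b = g b := fun b hb =>
    by_contra fun hn => hmin ⟨b, hn⟩ trivial hb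
  rcases lt_or_gt_of_ne ha with hlt | hlt
  · exact Or.inl ⟨a, hlt, heq⟩
  · exact Or.inr (Or.inr ⟨a, hlt, fun b hb => (heq b hb).symm⟩)

theorem isPartialChain_negSeriesChain (hc : Set.InjOn c {f | #f.support < κ})
    (hp : IsPartialChain p) : IsPartialChain (negSeriesChain κ c p) where
  mem_left := by
    rintro a b ⟨f, g, hf, hg, hx, hy, hfg⟩
    exact ⟨f, hf, hx⟩
  mem_right := by
    rintro a b ⟨f, g, hf, hg, hx, hy, hfg⟩
    exact ⟨g, hg, hy⟩
  irrefl := by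
    rintro a ⟨f, g, hf, hg, rfl, hy, hfg⟩
    obtain rfl := hc hg.card_lt hf.card_lt hy
    exact LexLT.irrefl _ _ hfg
  trans := by
    rintro _ _ _ ⟨f, g, hf, hg, rfl, rfl, hfg⟩ ⟨g', h, hg', hh, he, rfl, hgh⟩
    obtain rfl := hc hg'.card_lt hg.card_lt he
    exact ⟨f, h, hf, hh, rfl, rfl,
      hfg.trans hp hf.support_subset hg.support_subset hh.support_subset hgh⟩
  total := by
    rintro _ ⟨f, hf, rfl⟩ _ ⟨g, hg, rfl⟩
    rcases hf.lexLT_total hp hg with h | rfl | h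
    · exact Or.inl ⟨f, g, hf, hg, rfl, rfl, h⟩
    · exact Or.inr (Or.inl rfl)
    · exact Or.inr (Or.inr ⟨g, f, hg, hf, rfl, rfl, h⟩)

theorem isPartialChain_sSup {C : Set (Set U × (U → U → Prop))} (hC : IsChain (· ≤ ·) C)
    (h : ∀ p ∈ C, IsPartialChain p) : IsPartialChain (sSup C) := by
  have mem_fst : ∀ a, a ∈ (sSup C).1 ↔ ∃ p ∈ C, a ∈ p.1 := by
    intro a
    simp [Prod.fst_sSup]
  have mem_snd : ∀ a b, (sSup C).2 a b ↔ ∃ p ∈ C, p.2 a b := by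
    intro a b
    simp only [Prod.snd_sSup, sSup_apply, iSup_apply, iSup_Prop_eq]
    constructor
    · rintro ⟨⟨_, p, hp, rfl⟩, hab⟩
      exact ⟨p, hp, hab⟩
    · rintro ⟨p, hp, hab⟩
      exact ⟨⟨_, p, hp, rfl⟩, hab⟩
  refine ⟨fun a b hab => ?_, fun a b hab => ?_, fun a haa => ?_, fun a b d hab hbd => ?_,
    fun a ha b hb => ?_⟩
  · obtain ⟨p, hp, hab⟩ := (mem_snd a b).1 hab
    exact (mem_fst a).2 ⟨p, hp, (h p hp).mem_left _ _ hab⟩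
  · obtain ⟨p, hp, hab⟩ := (mem_snd a b).1 hab
    exact (mem_fst b).2 ⟨p, hp, (h p hp).mem_right _ _ hab⟩
  · obtain ⟨p, hp, haa⟩ := (mem_snd a a).1 haa
    exact (h p hp).irrefl a haa
  · obtain ⟨p, hp, hab⟩ := (mem_snd a b).1 hab
    obtain ⟨q, hq, hbd⟩ := (mem_snd b d).1 hbd
    rcases hC.total hp hq with hpq | hqp
    · exact (mem_snd a d).2 ⟨q, hq, (h q hq).trans _ _ _ (hpq.2 _ _ hab) hbd⟩
    · exact (mem_snd a d).2 ⟨p, hp, (h p hp).trans _ _ _ hab (hqp.2 _ _ hbd)⟩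
  · obtain ⟨p, hp, ha⟩ := (mem_fst a).1 ha
    obtain ⟨q, hq, hb⟩ := (mem_fst b).1 hb
    obtain ⟨r, hr, har, hbr⟩ : ∃ r ∈ C, a ∈ r.1 ∧ b ∈ r.1 := by
      rcases hC.total hp hq with hpq | hqp
      · exact ⟨q, hq, hpq.1 ha, hb⟩
      · exact ⟨p, hp, ha, hqp.1 hb⟩
    rcases (h r hr).total a har b hbr with hab | hab | hab
    · exact Or.inl ((mem_snd a b).2 ⟨r, hr, hab⟩)
    · exact Or.inr (Or.inl hab)
    · exact Or.inr (Or.inr ((mem_snd b a).2 ⟨r, hr, hab⟩))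

/-- A chain contained in its chain of negative series extends to one equal to it. -/
theorem exists_negSeriesChain_eq_self (hc : Set.InjOn c {f | #f.support < κ})
    (hp : IsPartialChain p) (hpc : p ≤ negSeriesChain κ c p) :
    ∃ m, p ≤ m ∧ IsPartialChain m ∧ negSeriesChain κ c m = m := by
  obtain ⟨m, hpm, hm⟩ := zorn_le_nonempty₀
    {p : Set U × (U → U → Prop) | IsPartialChain p ∧ p ≤ negSeriesChain κ c p}
    (fun C hCs hC y _ => by
      have hsup := isPartialChain_sSup hC fun p hp => (hCs hp).1
      refine ⟨sSup C, ⟨hsup, sSup_le fun p hp => ?_⟩, fun z hz => le_sSup hz⟩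
      exact (hCs hp).2.trans (negSeriesChain_mono (hCs hp).1 hsup (le_sSup hp)))
    p ⟨hp, hpc⟩
  have hm' := isPartialChain_negSeriesChain hc hm.prop.1
  exact ⟨m, hpm, hm.prop.1, (hm.eq_of_le
    ⟨hm', negSeriesChain_mono hm.prop.1 hm' hm.prop.2⟩ hm.prop.2).symm⟩

end LexRelation

section Coding

/-- Functions with support smaller than `κ` are determined by two sequences of length `κ`. -/
theorem exists_extend_eq_of_card_support_lt {U : Type u} [Nonempty U] {κ : Cardinal.{u}}
    {f : U → ℝ} (hf : #f.support < κ) :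
    ∃ (s : κ.out → U) (r : κ.out → ℝ), Function.extend s r 0 = f := by
  have hle : #f.support ≤ #κ.out := by simpa using hf.le
  obtain ⟨e⟩ := hle
  let s : κ.out → U := Function.extend e Subtype.val fun _ => Classical.arbitrary U
  have hs : ∀ u : f.support, s (e u) = u := fun u => e.injective.extend_apply _ _ u
  refine ⟨s, f ∘ s, funext fun u => ?_⟩
  by_cases hu : ∃ i, s i = u
  · classical
    rw [Function.extend_def, dif_pos hu, Function.comp_apply, Classical.choose_spec hu]
  · rw [Function.extend_apply' _ _ _ hu]
    by_contra hn
    exact hu ⟨e ⟨u, fun h => hn h.symm⟩, hs _⟩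

/-- Some type containing `Γ₀` injectively codes its own real functions of support smaller than
`κ`, with each `γ : Γ₀` coding the function `-1_γ`. -/
theorem exists_injOn_coding (κ : Cardinal.{u}) (Γ₀ : Type u) :
    ∃ (U : Type u) (a : Γ₀ → U) (c : (U → ℝ) → U), Function.Injective a ∧
      Set.InjOn c {f | #f.support < κ} ∧
      ∀ γ, c (Set.indicator {a γ} (-1)) = a γ := by
  classical
  let K : Type u := κ.out ⊕ Γ₀ ⊕ ULift.{u} ℕ
  let U : Type u := Γ₀ ⊕ Set K
  have hK : ℵ₀ ≤ #K := by
    simp only [K, mk_sum, lift_id, mk_uLift, mk_nat, lift_aleph0]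
    exact le_trans le_add_self le_add_self
  have hκK : κ ≤ #K := by
    simp only [K, mk_sum, lift_id, mk_out]
    exact le_self_add
  have hΓK : #Γ₀ ≤ #K := by
    simp only [K, mk_sum, lift_id]
    exact le_trans le_self_add le_add_self
  have hV : ℵ₀ ≤ (2 : Cardinal.{u}) ^ #K := hK.trans (cantor _).le
  have hU : #U ≤ 2 ^ #K := by
    simp only [U, mk_sum, lift_id, mk_set]
    exact add_le_of_le hV (hΓK.trans (cantor _).le) le_rfl
  have hR : #(ULift.{u} ℝ) ≤ 2 ^ #K := by
    simp only [mk_uLift, mk_real, lift_continuum]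
    rw [← two_power_aleph0]
    exact power_le_power_left two_ne_zero hK
  have hpow : ((2 : Cardinal.{u}) ^ #K) ^ κ ≤ 2 ^ #K := by
    rw [← power_mul]
    exact power_le_power_left two_ne_zero (mul_le_of_le hK le_rfl hκK)
  have hcard : #((κ.out → U) × (κ.out → ULift.{u} ℝ)) ≤ #(Set K) := by
    rw [mk_prod, lift_id, lift_id, ← power_def, ← power_def, mk_out, mk_set]
    exact mul_le_of_le hV ((power_le_power_right hU).trans hpow)
      ((power_le_power_right hR).trans hpow)
  obtain ⟨j⟩ := hcard
  have : Nonempty U := ⟨Sum.inr ∅⟩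
  have hex : ∀ f : U → ℝ, ∃ d : (κ.out → U) × (κ.out → ULift.{u} ℝ),
      #f.support < κ → Function.extend d.1 (fun i => (d.2 i).down) 0 = f := by
    intro f
    by_cases hf : #f.support < κ
    · obtain ⟨s, r, h⟩ := exists_extend_eq_of_card_support_lt hf
      exact ⟨(s, fun i => ⟨r i⟩), fun _ => h⟩
    · exact ⟨(fun _ => Sum.inr ∅, fun _ => ⟨0⟩), fun h => absurd h hf⟩
  choose d hd using hex
  let c : (U → ℝ) → U := fun f =>
    if h : ∃ γ : Γ₀, f = Set.indicator {Sum.inl γ} (-1) then Sum.inl h.choose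
    else Sum.inr (j (d f))
  have hinl : ∀ γ γ' : Γ₀, (Set.indicator {Sum.inl γ} (-1) : U → ℝ) =
      Set.indicator {Sum.inl γ'} (-1) → γ = γ' := by
    intro γ γ' h
    by_contra hne
    have := congrFun h (Sum.inl γ)
    simp [hne] at this
  refine ⟨U, Sum.inl, c, Sum.inl_injective, ?_, fun γ => ?_⟩
  · intro f hf g hg hfg
    simp only [c] at hfg
    split_ifs at hfg with h1 h2 h2
    · rw [h1.choose_spec, h2.choose_spec, Sum.inl_injective hfg]
    · rw [← hd f hf, ← hd g hg, j.injective (Sum.inr_injective hfg)]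
  · have h : ∃ γ' : Γ₀, (Set.indicator {Sum.inl γ} (-1) : U → ℝ) =
        Set.indicator {Sum.inl γ'} (-1) := ⟨γ, rfl⟩
    simp only [c]
    rw [dif_pos h, ← hinl _ _ h.choose_spec]

end Coding

/-- Every chain embeds into its chain of negative series via `γ ↦ -1_γ`. -/
theorem le_negSeriesChain_image {κ : Cardinal.{u}} (hκ : 1 < κ) {Γ₀ U : Type u} [LinearOrder Γ₀]
    {a : Γ₀ → U} {c : (U → ℝ) → U} (ha : Function.Injective a)
    (hca : ∀ γ, c (Set.indicator {a γ} (-1)) = a γ) :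
    let p : Set U × (U → U → Prop) :=
      (Set.range a, fun x y => ∃ γ γ', γ < γ' ∧ a γ = x ∧ a γ' = y)
    IsPartialChain p ∧ p ≤ negSeriesChain κ c p := by
  intro p
  have hp : IsPartialChain p := by
    refine ⟨?_, ?_, ?_, ?_, ?_⟩
    · rintro _ _ ⟨γ, γ', h, rfl, rfl⟩
      exact ⟨γ, rfl⟩
    · rintro _ _ ⟨γ, γ', h, rfl, rfl⟩
      exact ⟨γ', rfl⟩
    · rintro _ ⟨γ, γ', h, rfl, he⟩
      exact h.ne' (ha he)
    · rintro _ _ _ ⟨γ, γ', h, rfl, rfl⟩ ⟨δ, δ', h', he, rfl⟩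
      obtain rfl := ha he
      exact ⟨γ, δ', h.trans h', rfl, rfl⟩
    · rintro _ ⟨γ, rfl⟩ _ ⟨γ', rfl⟩
      rcases lt_trichotomy γ γ' with h | h | h
      · exact Or.inl ⟨γ, γ', h, rfl, rfl⟩
      · exact Or.inr (Or.inl (h ▸ rfl))
      · exact Or.inr (Or.inr ⟨γ', γ, h, rfl, rfl⟩)
  have hsupp : ∀ γ, (Set.indicator {a γ} (-1) : U → ℝ).support = {a γ} := by
    intro γ
    ext x
    by_cases hx : x = a γ <;> simp [hx]
  have hbelow : ∀ γ b, p.2 b (a γ) → (Set.indicator {a γ} (-1) : U → ℝ) b = 0 := by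
    intro γ b hb
    have hne : b ≠ a γ := fun h => hp.irrefl _ (h ▸ hb)
    simp [hne]
  have hneg : ∀ γ, IsNegSeries κ p (Set.indicator {a γ} (-1)) := by
    refine fun γ => ⟨?_, ?_, ?_, a γ, by simp, hbelow γ⟩
    · rw [hsupp]
      simpa using hκ
    · rw [hsupp]
      rintro _ rfl
      exact ⟨γ, rfl⟩
    · rw [hsupp]
      have : IsStrictOrder U p.2 := { irrefl := hp.irrefl, trans := hp.trans }
      exact Set.wellFoundedOn_singleton
  refine ⟨hp, ?_, ?_⟩
  · rintro _ ⟨γ, rfl⟩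
    exact ⟨_, hneg γ, hca γ⟩
  · rintro _ _ ⟨γ, γ', h, rfl, rfl⟩
    refine ⟨_, _, hneg γ, hneg γ', hca γ, hca γ', a γ, ?_, fun b hb => ?_⟩
    · have hne : a γ ≠ a γ' := fun he => h.ne (ha he)
      simp [hne]
    · rw [hbelow γ b hb, hbelow γ' b (hp.trans _ _ _ hb ⟨γ, γ', h, rfl, rfl⟩)]

/-- **Existence of the κ-th iterated lexicographic power.**  For every regular
uncountable cardinal `κ` and every nonempty chain `Γ₀` there is a chain `Γ`
containing `Γ₀` as a subchain together with an order isomorphism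
`ι : Γ → G^{<0}`, where `G = (ℝ^Γ)_κ`. -/
theorem exists_iterated_lexicographic_power
    (κ : Cardinal.{u}) (hreg : κ.IsRegular) (hunc : ℵ₀ < κ)
    (Γ₀ : Type u) [LinearOrder Γ₀] [Nonempty Γ₀] :
    ∃ (Γ : Type u) (li : LinearOrder Γ), @IsIterLexPower κ Γ₀ Γ _ li := by
  classical
  obtain ⟨U, a, c, ha, hc, hca⟩ := exists_injOn_coding κ Γ₀
  obtain ⟨hp, hpc⟩ := le_negSeriesChain_image (one_lt_aleph0.trans hunc) ha hca
  obtain ⟨⟨X, R⟩, hpm, hm, hfix⟩ := exists_negSeriesChain_eq_self hc hp hpc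
  have hX : ∀ x, x ∈ X ↔ ∃ f, IsNegSeries κ (X, R) f ∧ c f = x := fun x =>
    (Set.ext_iff.1 (congrArg Prod.fst hfix) x).symm
  have hR : ∀ x y, R x y ↔ ∃ f g, IsNegSeries κ (X, R) f ∧ IsNegSeries κ (X, R) g ∧
      c f = x ∧ c g = y ∧ LexLT R f g := fun x y =>
    (iff_of_eq (congrFun (congrFun (congrArg Prod.snd hfix) x) y)).symm
  have : IsStrictTotalOrder X (fun x y => R x y) :=
    { irrefl := fun x => hm.irrefl x
      trans := fun x y z => hm.trans x y z
      trichotomous := fun x y hxy hyx => by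
        rcases hm.total x x.2 y y.2 with h | h | h
        · exact absurd h hxy
        · exact Subtype.ext h
        · exact absurd h hyx }
  let li : LinearOrder X := linearOrderOfSTO (fun x y : X => R x y)
  have lt_iff : ∀ x y : X, x < y ↔ R x y := fun _ _ => Iff.rfl
  choose φ hφ hcφ using fun x : X => (hX x).1 x.2
  have hzero : ∀ {f : U → ℝ}, f.support ⊆ X → ∀ b, b ∉ X → f b = 0 :=
    fun hf b hb => by_contra fun h => hb (hf h)
  have hlt_iff : ∀ (F G : HahnSeries X ℝ) (f g : U → ℝ), f.support ⊆ X → g.support ⊆ X →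
      (∀ x : X, F.coeff x = f x) → (∀ x : X, G.coeff x = g x) → (hlt F G ↔ LexLT R f g) := by
    intro F G f g hf hg hF hG
    constructor
    · rintro ⟨x, hx, hlow⟩
      refine ⟨x, by rwa [← hF, ← hG], fun b hb => ?_⟩
      rw [← hF ⟨b, hm.mem_left _ _ hb⟩, ← hG ⟨b, hm.mem_left _ _ hb⟩]
      exact hlow _ hb
    · rintro ⟨x, hx, hlow⟩
      have hxX : x ∈ X := by
        by_contra hn
        simp [hzero hf x hn, hzero hg x hn] at hx
      refine ⟨⟨x, hxX⟩, by rwa [hF, hG], fun b hb => ?_⟩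
      rw [hF, hG]
      exact hlow b hb
  let ι : X → HahnSeries X ℝ := fun x =>
    { coeff := fun y => φ x y
      isPWO_support' := by
        rw [Set.isPWO_iff_isWF]
        refine Set.wellFoundedOn_image (f := Subtype.val) (r := R) |>.1 ((hφ x).wellFoundedOn.subset ?_)
        rintro _ ⟨y, hy, rfl⟩
        exact hy }
  have hι : ∀ x y, (ι x).coeff y = φ x y := fun _ _ => rfl
  refine ⟨X, li, ⟨fun γ => ⟨a γ, hpm.1 ⟨γ, rfl⟩⟩, fun γ γ' h => hpm.2 _ _ ⟨γ, γ', h, rfl, rfl⟩⟩,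
    ι, fun x => ⟨?_, ?_⟩, fun x y => ?_, fun G hG hneg => ?_⟩
  · refine lt_of_le_of_lt ?_ (hφ x).card_lt
    exact mk_le_of_injective (f := fun y : (ι x).support => (⟨y, y.2⟩ : (φ x).support))
      fun y z h => Subtype.ext (Subtype.ext (Subtype.mk.inj h))
  · exact (hlt_iff _ _ _ 0 (hφ x).support_subset (by simp) (hι x) fun _ => rfl).2 (hφ x).neg
  · rw [lt_iff, hR, hlt_iff _ _ _ _ (hφ x).support_subset (hφ y).support_subset (hι x) (hι y)]
    constructor
    · rintro ⟨f, g, hf, hg, hx, hy, hfg⟩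
      rw [hc (hφ x).card_lt hf.card_lt ((hcφ x).trans hx.symm),
        hc (hφ y).card_lt hg.card_lt ((hcφ y).trans hy.symm)]
      exact hfg
    · exact fun h => ⟨_, _, hφ x, hφ y, hcφ x, hcφ y, h⟩
  · let g : U → ℝ := Function.extend Subtype.val G.coeff 0
    have hg : ∀ x : X, G.coeff x = g x := fun x =>
      (Subtype.val_injective.extend_apply G.coeff 0 x).symm
    have hsupp : g.support = Subtype.val '' G.support := by
      ext u
      by_cases hu : u ∈ X
      · simp [hu, ← hg ⟨u, hu⟩]
      · have : g u = 0 := Function.extend_apply' _ _ _ fun ⟨x, hx⟩ => hu (hx ▸ x.2)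
        simp [this, hu]
    have hsub : g.support ⊆ X := by
      rw [hsupp]
      rintro _ ⟨x, -, rfl⟩
      exact x.2
    have hgneg : IsNegSeries κ (X, R) g := by
      refine ⟨?_, hsub, ?_, (hlt_iff G 0 g 0 hsub (by simp) hg fun _ => rfl).1 hneg⟩
      · rw [hsupp]
        exact mk_image_le.trans_lt hG
      · rw [hsupp]
        exact Set.wellFoundedOn_image.2 G.isWF_support
    refine ⟨⟨c g, (hX _).2 ⟨g, hgneg, rfl⟩⟩, ?_⟩
    ext x
    rw [hι, hg, hc (hφ _).card_lt hgneg.card_lt (hcφ _)]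
end

section
/- Let κ be a regular uncountable cardinal and Γ₀ a nonempty chain admitting an increasing automorphism (an order automorphism σ₀ with σ₀(γ) > γ for all γ ∈ Γ₀). Then there exist a chain Γ containing Γ₀ and an order isomorphism l : Γ → G^{<0}, where G = (ℝ^Γ)_κ, such that l(min support g) > g for every g ∈ G^{<0}. Consequently K = ℝ((G))_κ admits a (GA)-left logarithm. -/
open Cardinal Classical

universe u

/-- `Γ` is a chain containing `Γ₀`, equipped with an order isomorphism
`l : Γ → G^{<0}` (`G = (ℝ^Γ)_κ`) satisfying `l(min support g) > g` for all
`g ∈ G^{<0}`; consequently `K = ℝ((G))_κ` admits a (GA)-left logarithm. -/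
def IsGALexPower (κ : Cardinal) (Γ₀ Γ : Type*) [LinearOrder Γ₀] [LinearOrder Γ] : Prop :=
  (∃ e : Γ₀ → Γ, StrictMono e) ∧
  ∃ l : Γ → HahnSeries Γ ℝ,
    (∀ γ, #(l γ).support < κ ∧ hlt (l γ) 0) ∧
    (∀ γ γ', γ < γ' ↔ hlt (l γ) (l γ')) ∧
    (∀ g : HahnSeries Γ ℝ, #g.support < κ → hlt g 0 → ∃ γ, l γ = g) ∧
    -- l(min support g) > g for every negative κ-bounded g
    (∀ g : HahnSeries Γ ℝ, #g.support < κ → hlt g 0 →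
      ∀ γ₀, g.coeff γ₀ ≠ 0 → (∀ γ, g.coeff γ ≠ 0 → γ₀ ≤ γ) → hlt g (l γ₀)) ∧
    -- consequently: K admits a (GA)-left logarithm
    ∃ L : {g : HahnSeries Γ ℝ // #g.support < κ} → (HahnSeries Γ ℝ → ℝ),
      (∀ g γ, L g (l γ) = -(g.1.coeff γ)) ∧
      (∀ g h, h ∉ Set.range l → L g h = 0) ∧
      (∀ g, L g ∈ NegK κ Γ) ∧
      Function.Injective L ∧
      (∀ F ∈ NegK κ Γ, ∃ g, L g = F) ∧
      (∀ g g' g'', g.1 + g'.1 = g''.1 → ∀ h, L g'' h = L g h + L g' h) ∧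
      (∀ g g', hlt g'.1 g.1 ↔ hlt2 (L g) (L g')) ∧
      -- (GA): t^g > n·log(t^g) for all n ∈ ℕ and g ∈ G^{<0}
      (∀ (n : ℕ) (g : {g : HahnSeries Γ ℝ // #g.support < κ}), hlt g.1 0 →
        hlt2 (fun h => n * L g h) (fun h => if h = g.1 then 1 else 0))

/-- The lexicographic comparison of real-valued functions along a relation on the index type. -/
def LexBelow {U : Type*} (R : U → U → Prop) (f g : U → ℝ) : Prop :=
  ∃ a, f a < g a ∧ ∀ b, R b a → f b = g b

/-- A chain inside `U` such that the code `D x` of each of its elements is a negative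
`κ`-bounded series over the chain whose least exponent lies above `x`, and whose order
is the lexicographic order of the codes. -/
structure LexChain {U : Type u} (κ : Cardinal.{u}) (D : U → U → ℝ) where
  carrier : Set U
  rel : U → U → Prop
  mem_of_rel : ∀ {x y}, rel x y → x ∈ carrier ∧ y ∈ carrier
  irrefl : ∀ x, ¬ rel x x
  trans : ∀ {x y z}, rel x y → rel y z → rel x z
  total : ∀ {x y}, x ∈ carrier → y ∈ carrier → rel x y ∨ x = y ∨ rel y x
  mem_of_code_ne : ∀ {x a}, x ∈ carrier → D x a ≠ 0 → a ∈ carrier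
  card_lt : ∀ {x}, x ∈ carrier → #(Function.support (D x)) < κ
  wf : ∀ {x}, x ∈ carrier → (Function.support (D x)).WellFoundedOn rel
  rel_iff : ∀ {x y}, x ∈ carrier → y ∈ carrier → (rel x y ↔ LexBelow rel (D x) (D y))
  leading : ∀ {x}, x ∈ carrier → ∃ a, D x a < 0 ∧ rel x a ∧ ∀ b, rel b a → D x b = 0

namespace LexChain

variable {U : Type u} {κ : Cardinal.{u}} {D : U → U → ℝ}

/-- `q` extends `p` as a chain. -/
def Extends (p q : LexChain κ D) : Prop :=
  p.carrier ⊆ q.carrier ∧ ∀ x ∈ p.carrier, ∀ y ∈ p.carrier, (p.rel x y ↔ q.rel x y)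

theorem Extends.refl (p : LexChain κ D) : p.Extends p :=
  ⟨subset_rfl, fun _ _ _ _ => Iff.rfl⟩

theorem Extends.trans {p q r : LexChain κ D} (h : p.Extends q) (h' : q.Extends r) :
    p.Extends r :=
  ⟨h.1.trans h'.1, fun x hx y hy => (h.2 x hx y hy).trans (h'.2 x (h.1 hx) y (h.1 hy))⟩

theorem lexBelow_congr {S : Set U} {R R' : U → U → Prop}
    (h : ∀ x ∈ S, ∀ y ∈ S, (R x y ↔ R' x y)) {f g : U → ℝ}
    (hf : ∀ a, f a ≠ 0 → a ∈ S) (hg : ∀ a, g a ≠ 0 → a ∈ S) :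
    LexBelow R f g ↔ LexBelow R' f g := by
  refine exists_congr fun a => and_congr_right fun ha => forall_congr' fun b => ?_
  have haS : a ∈ S := by
    by_contra hS
    have h1 := not_imp_comm.1 (hf a) hS
    have h2 := not_imp_comm.1 (hg a) hS
    rw [h1, h2] at ha
    exact lt_irrefl _ ha
  by_cases hb : b ∈ S
  · rw [h b hb a haS]
  · simp [not_imp_comm.1 (hf b) hb, not_imp_comm.1 (hg b) hb]

theorem lexBelow_irrefl (R : U → U → Prop) (f : U → ℝ) : ¬ LexBelow R f f :=
  fun ⟨_, h, _⟩ => lt_irrefl _ h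

theorem mem_of_ne {S : Set U} {f g : U → ℝ} (hf : ∀ a, f a ≠ 0 → a ∈ S)
    (hg : ∀ a, g a ≠ 0 → a ∈ S) {a : U} (h : f a ≠ g a) : a ∈ S := by
  by_cases h0 : f a = 0
  · exact hg a fun h1 => h (h0.trans h1.symm)
  · exact hf a h0

theorem lexBelow_trans (p : LexChain κ D) {f g h : U → ℝ}
    (hf : ∀ a, f a ≠ 0 → a ∈ p.carrier) (hg : ∀ a, g a ≠ 0 → a ∈ p.carrier)
    (hh : ∀ a, h a ≠ 0 → a ∈ p.carrier)
    (hfg : LexBelow p.rel f g) (hgh : LexBelow p.rel g h) : LexBelow p.rel f h := by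
  obtain ⟨a, ha, ha'⟩ := hfg
  obtain ⟨b, hb, hb'⟩ := hgh
  rcases p.total (mem_of_ne hf hg ha.ne) (mem_of_ne hg hh hb.ne) with hab | rfl | hba
  · exact ⟨a, (hb' a hab) ▸ ha, fun c hc => (ha' c hc).trans (hb' c (p.trans hc hab))⟩
  · exact ⟨a, ha.trans hb, fun c hc => (ha' c hc).trans (hb' c hc)⟩
  · exact ⟨b, (ha' b hba) ▸ hb, fun c hc => (ha' c (p.trans hc hba)).trans (hb' c hc)⟩

theorem lexBelow_total (p : LexChain κ D) {f g : U → ℝ}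
    (wf : (Function.support f).WellFoundedOn p.rel)
    (wg : (Function.support g).WellFoundedOn p.rel) :
    LexBelow p.rel f g ∨ f = g ∨ LexBelow p.rel g f := by
  by_cases hfg : f = g
  · exact Or.inr (Or.inl hfg)
  have : IsStrictOrder U p.rel :=
    { irrefl := p.irrefl, trans := fun _ _ _ => p.trans }
  have w : WellFounded _ := Set.wellFoundedOn_iff.1 (wf.union wg)
  obtain ⟨x, hx⟩ := Function.ne_iff.1 hfg
  have hmem : ∀ {y}, f y ≠ g y → y ∈ Function.support f ∪ Function.support g := by
    intro y hy
    by_cases h0 : f y = 0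
    · exact Or.inr fun h1 => hy (h0.trans h1.symm)
    · exact Or.inl h0
  obtain ⟨a, ha, hmin⟩ := w.has_min {y | f y ≠ g y} ⟨x, hx⟩
  have hlow : ∀ b, p.rel b a → f b = g b := by
    intro b hb
    by_contra hne
    exact hmin b hne ⟨hb, hmem hne, hmem ha⟩
  rcases lt_or_gt_of_ne ha with h | h
  · exact Or.inl ⟨a, h, hlow⟩
  · exact Or.inr (Or.inr ⟨a, h, fun b hb => (hlow b hb).symm⟩)

/-- A family of chains that is totally ordered by extension has an upper bound, its union. -/
theorem exists_upper_bound {c : Set (LexChain κ D)}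
    (hc : ∀ p ∈ c, ∀ q ∈ c, p.Extends q ∨ q.Extends p) :
    ∃ ub : LexChain κ D, ∀ p ∈ c, p.Extends ub := by
  let S : Set U := {x | ∃ p ∈ c, x ∈ p.carrier}
  let R : U → U → Prop := fun x y => ∃ p ∈ c, p.rel x y
  have hR : ∀ p ∈ c, ∀ x ∈ p.carrier, ∀ y ∈ p.carrier, (p.rel x y ↔ R x y) := by
    refine fun p hp x hx y hy => ⟨fun h => ⟨p, hp, h⟩, ?_⟩
    rintro ⟨q, hq, h⟩
    rcases hc p hp q hq with e | e
    · exact (e.2 x hx y hy).2 h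
    · have := q.mem_of_rel h
      exact (e.2 x this.1 y this.2).1 h
  have hdir : ∀ x ∈ S, ∀ y ∈ S, ∃ p ∈ c, x ∈ p.carrier ∧ y ∈ p.carrier := by
    rintro x ⟨p, hp, hx⟩ y ⟨q, hq, hy⟩
    rcases hc p hp q hq with e | e
    · exact ⟨q, hq, e.1 hx, hy⟩
    · exact ⟨p, hp, hx, e.1 hy⟩
  have hlow : ∀ p ∈ c, ∀ x ∈ p.carrier, ∀ a ∈ p.carrier,
      (∀ b, p.rel b a → D x b = 0) → ∀ b, R b a → D x b = 0 := by
    intro p hp x hx a ha h b hb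
    by_contra hne
    exact hne (h b ((hR p hp b (p.mem_of_code_ne hx hne) a ha).2 hb))
  refine ⟨⟨S, R, ?_, ?_, ?_, ?_, ?_, ?_, ?_, ?_, ?_⟩,
    fun p hp => ⟨fun x hx => ⟨p, hp, hx⟩, hR p hp⟩⟩
  · rintro x y ⟨p, hp, h⟩
    exact ⟨⟨p, hp, (p.mem_of_rel h).1⟩, ⟨p, hp, (p.mem_of_rel h).2⟩⟩
  · rintro x ⟨p, hp, h⟩
    exact p.irrefl x h
  · rintro x y z ⟨p, hp, h⟩ ⟨q, hq, h'⟩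
    have hm := p.mem_of_rel h
    have hm' := q.mem_of_rel h'
    rcases hc p hp q hq with e | e
    · exact ⟨q, hq, q.trans ((e.2 x hm.1 y hm.2).1 h) h'⟩
    · exact ⟨p, hp, p.trans h ((e.2 y hm'.1 z hm'.2).1 h')⟩
  · intro x y hx hy
    obtain ⟨p, hp, hx, hy⟩ := hdir x hx y hy
    rw [← hR p hp x hx y hy, ← hR p hp y hy x hx]
    exact p.total hx hy
  · rintro x a ⟨p, hp, hx⟩ ha
    exact ⟨p, hp, p.mem_of_code_ne hx ha⟩
  · rintro x ⟨p, hp, hx⟩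
    exact p.card_lt hx
  · rintro x ⟨p, hp, hx⟩
    exact (p.wf hx).mono' fun a ha b hb h =>
      (hR p hp a (p.mem_of_code_ne hx ha) b (p.mem_of_code_ne hx hb)).2 h
  · intro x y hx hy
    obtain ⟨p, hp, hx, hy⟩ := hdir x hx y hy
    rw [← hR p hp x hx y hy, p.rel_iff hx hy]
    exact lexBelow_congr (hR p hp) (fun _ => p.mem_of_code_ne hx) (fun _ => p.mem_of_code_ne hy)
  · rintro x ⟨p, hp, hx⟩
    obtain ⟨a, ha, hxa, hlow'⟩ := p.leading hx
    exact ⟨a, ha, ⟨p, hp, hxa⟩, hlow p hp x hx a (p.mem_of_rel hxa).2 hlow'⟩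

theorem exists_maximal (p₀ : LexChain κ D) :
    ∃ p : LexChain κ D, p₀.Extends p ∧ ∀ q, p.Extends q → q.Extends p := by
  have : Nonempty {p : LexChain κ D // p₀.Extends p} := ⟨⟨p₀, .refl p₀⟩⟩
  obtain ⟨m, hm⟩ := exists_maximal_of_nonempty_chains_bounded
    (r := fun p q : {p : LexChain κ D // p₀.Extends p} => p.1.Extends q.1)
    (fun c hc hne => by
      obtain ⟨ub, hub⟩ := exists_upper_bound (c := Subtype.val '' c) (by
        rintro _ ⟨p, hp, rfl⟩ _ ⟨q, hq, rfl⟩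
        by_cases h : p = q
        · exact h ▸ Or.inl (.refl _)
        · exact hc hp hq h)
      obtain ⟨p, hp⟩ := hne
      exact ⟨⟨ub, p.2.trans (hub _ ⟨p, hp, rfl⟩)⟩, fun a ha => hub _ ⟨a, ha, rfl⟩⟩)
    (fun h h' => h.trans h')
  exact ⟨m.1, m.2, fun q hq => hm ⟨q, m.2.trans hq⟩ hq⟩

/-- Adjoin a code of a negative series over the chain that has no code in the chain yet. -/
theorem exists_insert (p : LexChain κ D) {x₀ : U}
    (hS : ∀ a, D x₀ a ≠ 0 → a ∈ p.carrier) (hcard : #(Function.support (D x₀)) < κ)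
    (hwf : (Function.support (D x₀)).WellFoundedOn p.rel)
    (hneg : ∃ a, D x₀ a < 0 ∧ ∀ b, p.rel b a → D x₀ b = 0)
    (hnew : ∀ x ∈ p.carrier, D x ≠ D x₀) :
    ∃ q : LexChain κ D, p.Extends q ∧ x₀ ∈ q.carrier := by
  let S : Set U := insert x₀ p.carrier
  let R : U → U → Prop := fun x y => x ∈ S ∧ y ∈ S ∧ LexBelow p.rel (D x) (D y)
  have hR : ∀ x ∈ p.carrier, ∀ y ∈ p.carrier, (p.rel x y ↔ R x y) := fun x hx y hy => by
    rw [p.rel_iff hx hy]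
    exact ⟨fun h => ⟨Or.inr hx, Or.inr hy, h⟩, fun h => h.2.2⟩
  have hsupp : ∀ x ∈ S, ∀ a, D x a ≠ 0 → a ∈ p.carrier := by
    rintro x (rfl | hx) a ha
    exacts [hS a ha, p.mem_of_code_ne hx ha]
  have hcardS : ∀ x ∈ S, #(Function.support (D x)) < κ := by
    rintro x (rfl | hx)
    exacts [hcard, p.card_lt hx]
  have hwfS : ∀ x ∈ S, (Function.support (D x)).WellFoundedOn p.rel := by
    rintro x (rfl | hx)
    exacts [hwf, p.wf hx]
  have hinj : ∀ x ∈ S, ∀ y ∈ S, D x = D y → x = y := by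
    rintro x (rfl | hx) y (rfl | hy) h
    · rfl
    · exact absurd h.symm (hnew y hy)
    · exact absurd h (hnew x hx)
    · rcases p.total hx hy with h' | h' | h'
      · rw [p.rel_iff hx hy, h] at h'
        exact absurd h' (lexBelow_irrefl _ _)
      · exact h'
      · rw [p.rel_iff hy hx, h] at h'
        exact absurd h' (lexBelow_irrefl _ _)
  have hlow : ∀ x ∈ S, ∀ a ∈ p.carrier,
      (∀ b, p.rel b a → D x b = 0) → ∀ b, R b a → D x b = 0 := by
    intro x hx a ha h b hb
    by_contra hne
    exact hne (h b ((hR b (hsupp x hx b hne) a ha).2 hb))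
  refine ⟨⟨S, R, fun h => ⟨h.1, h.2.1⟩, fun x h => lexBelow_irrefl _ _ h.2.2, ?_, ?_, ?_,
    fun hx => hcardS _ hx, ?_, ?_, ?_⟩, ⟨Set.subset_insert _ _, hR⟩, Set.mem_insert _ _⟩
  · rintro x y z ⟨hx, hy, h⟩ ⟨-, hz, h'⟩
    exact ⟨hx, hz, p.lexBelow_trans (hsupp x hx) (hsupp y hy) (hsupp z hz) h h'⟩
  · intro x y hx hy
    rcases p.lexBelow_total (hwfS x hx) (hwfS y hy) with h | h | h
    · exact Or.inl ⟨hx, hy, h⟩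
    · exact Or.inr (Or.inl (hinj x hx y hy h))
    · exact Or.inr (Or.inr ⟨hy, hx, h⟩)
  · exact fun hx ha => Or.inr (hsupp _ hx _ ha)
  · exact fun {x} hx => (hwfS x hx).mono' fun a ha b hb h =>
      (hR a (hsupp x hx a ha) b (hsupp x hx b hb)).2 h
  · intro x y hx hy
    rw [← lexBelow_congr hR (hsupp x hx) (hsupp y hy)]
    exact ⟨fun h => h.2.2, fun h => ⟨hx, hy, h⟩⟩
  · rintro x (rfl | hx)
    · obtain ⟨a, ha, ha'⟩ := hneg
      have haS := hS a ha.ne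
      refine ⟨a, ha, ⟨Or.inl rfl, Or.inr haS, a, ?_, ?_⟩,
        hlow x (Or.inl rfl) a haS ha'⟩
      all_goals obtain ⟨d, -, had, hd⟩ := p.leading haS
      · rwa [hd a had]
      · exact fun b hb => (ha' b hb).trans (hd b (p.trans hb had)).symm
    · obtain ⟨a, ha, hxa, hlow'⟩ := p.leading hx
      have haS := (p.mem_of_rel hxa).2
      exact ⟨a, ha, (hR x hx a haS).1 hxa, hlow x (Or.inr hx) a haS hlow'⟩

/-- If every `κ`-bounded function has a code, every chain extends to one that contains a code
of each negative `κ`-bounded series over it. -/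
theorem exists_saturated (hD : ∀ f : U → ℝ, #(Function.support f) < κ → ∃ x, D x = f)
    (p₀ : LexChain κ D) :
    ∃ p : LexChain κ D, p₀.Extends p ∧ ∀ f : U → ℝ, (∀ a, f a ≠ 0 → a ∈ p.carrier) →
      #(Function.support f) < κ → (Function.support f).WellFoundedOn p.rel →
      (∃ a, f a < 0 ∧ ∀ b, p.rel b a → f b = 0) → ∃ x ∈ p.carrier, D x = f := by
  obtain ⟨p, hp, hmax⟩ := exists_maximal p₀
  refine ⟨p, hp, fun f hS hcard hwf hneg => ?_⟩
  by_contra! hnew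
  obtain ⟨x₀, rfl⟩ := hD f hcard
  obtain ⟨q, hpq, hq⟩ := p.exists_insert hS hcard hwf hneg hnew
  exact hnew x₀ ((hmax q hpq).1 hq) rfl

/-- The linear order on the carrier of a chain. -/
noncomputable abbrev linearOrder (p : LexChain κ D) : LinearOrder p.carrier :=
  haveI : IsStrictTotalOrder p.carrier (fun x y => p.rel x y) :=
    { irrefl := fun x => p.irrefl x
      trans := fun _ _ _ => p.trans
      trichotomous := fun x y h h' => by
        rcases p.total x.2 y.2 with e | e | e
        exacts [absurd e h, Subtype.ext e, absurd e h'] }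
  linearOrderOfSTO (fun x y : p.carrier => p.rel x y)

end LexChain

/-- The type of `κ`-bounded functions on `Γ₀ ⊕ V` is no larger than `V`, for suitable `V`. -/
theorem exists_card_bounded_functions_le (κ : Cardinal.{u}) (hκ : ℵ₀ ≤ κ) (Γ₀ : Type u) :
    ∃ V : Type u, Nonempty V ∧ #{f : Γ₀ ⊕ V → ℝ // #(Function.support f) < κ} ≤ #V := by
  let X : Type u := Γ₀ ⊕ ULift.{u} ℝ
  let V : Type u := κ.out → X
  refine ⟨V, ⟨fun _ => Sum.inr ⟨0⟩⟩, ?_⟩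
  have hX : #X ≤ #V := by
    rw [← power_def, mk_out]
    exact self_le_power _ (one_le_aleph0.trans hκ)
  have hc : 𝔠 ≤ #V := le_trans (by simp [X, mk_real]) hX
  have hV : ℵ₀ ≤ #V := aleph0_le_continuum.trans hc
  have hΓ : #Γ₀ ≤ #V := le_trans (by simp [X]) hX
  have hY : #(Option ((Γ₀ ⊕ V) × ULift.{u} ℝ)) ≤ #V := by
    rw [mk_option, mk_prod, mk_sum]
    simp only [lift_id, mk_uLift, mk_real, lift_continuum]
    exact add_le_of_le hV (mul_le_of_le hV (add_le_of_le hV hΓ le_rfl) hc)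
      (one_le_aleph0.trans hV)
  calc #{f : Γ₀ ⊕ V → ℝ // #(Function.support f) < κ}
      ≤ #(κ.out → Option ((Γ₀ ⊕ V) × ULift.{u} ℝ)) := ?_
    _ ≤ #V ^ κ := by
      rw [← power_def, mk_out]
      exact power_le_power_right hY
    _ = #V := by
      conv_lhs => rw [← power_def, mk_out, ← power_mul, mul_eq_self hκ]
      rw [← power_def, mk_out]
  have key : ∀ f : {f : Γ₀ ⊕ V → ℝ // #(Function.support f) < κ},
      ∃ e : Function.support f.1 → κ.out, Function.Injective e := fun f => by
    have h : #(Function.support f.1) ≤ #κ.out := by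
      rw [mk_out]
      exact f.2.le
    obtain ⟨e⟩ := h
    exact ⟨e, e.injective⟩
  choose e he using key
  let c : {f : Γ₀ ⊕ V → ℝ // #(Function.support f) < κ} →
      κ.out → Option ((Γ₀ ⊕ V) × ULift.{u} ℝ) := fun f =>
    Function.extend (e f) (fun x => some (x.1, ⟨f.1 x.1⟩)) fun _ => none
  have hc : ∀ f x r, r ≠ 0 → (f.1 x = r ↔ some (x, ⟨r⟩) ∈ Set.range (c f)) := by
    intro f x r hr
    constructor
    · rintro rfl
      exact ⟨e f ⟨x, hr⟩, (he f).extend_apply _ _ _⟩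
    · rintro ⟨k, hk⟩
      by_cases hk' : ∃ y, e f y = k
      · obtain ⟨y, rfl⟩ := hk'
        simp only [c, (he f).extend_apply, Option.some.injEq, Prod.mk.injEq, ULift.up.injEq] at hk
        rw [← hk.1, hk.2]
      · simp [c, Function.extend_apply' _ _ _ hk'] at hk
  refine mk_le_of_injective (f := c) fun f g hfg => Subtype.ext (funext fun x => ?_)
  by_cases h : f.1 x = 0
  · by_contra hne
    have hg : g.1 x ≠ 0 := fun h' => hne (h.trans h'.symm)
    have := (hc g x _ hg).1 rfl
    rw [← hfg] at this
    exact hne ((hc f x _ hg).2 this)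
  · have := (hc f x _ h).1 rfl
    rw [hfg] at this
    exact ((hc g x _ h).2 this).symm

/-- The logarithm induced by an order isomorphism `l : Γ → G^{<0}` lying above the identity
on leading exponents. -/
theorem exists_log_of_lex_iso {κ : Cardinal.{u}} {Γ : Type u} [LinearOrder Γ]
    {l : Γ → HahnSeries Γ ℝ} (hl : ∀ γ, #(l γ).support < κ ∧ hlt (l γ) 0)
    (hlt_iff : ∀ γ γ', γ < γ' ↔ hlt (l γ) (l γ'))
    (hsurj : ∀ g : HahnSeries Γ ℝ, #g.support < κ → hlt g 0 → ∃ γ, l γ = g)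
    (hGA : ∀ g : HahnSeries Γ ℝ, #g.support < κ → hlt g 0 →
      ∀ γ₀, g.coeff γ₀ ≠ 0 → (∀ γ, g.coeff γ ≠ 0 → γ₀ ≤ γ) → hlt g (l γ₀)) :
    ∃ L : {g : HahnSeries Γ ℝ // #g.support < κ} → (HahnSeries Γ ℝ → ℝ),
      (∀ g γ, L g (l γ) = -(g.1.coeff γ)) ∧
      (∀ g h, h ∉ Set.range l → L g h = 0) ∧
      (∀ g, L g ∈ NegK κ Γ) ∧
      Function.Injective L ∧
      (∀ F ∈ NegK κ Γ, ∃ g, L g = F) ∧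
      (∀ g g' g'', g.1 + g'.1 = g''.1 → ∀ h, L g'' h = L g h + L g' h) ∧
      (∀ g g', hlt g'.1 g.1 ↔ hlt2 (L g) (L g')) ∧
      (∀ (n : ℕ) (g : {g : HahnSeries Γ ℝ // #g.support < κ}), hlt g.1 0 →
        hlt2 (fun h => n * L g h) (fun h => if h = g.1 then 1 else 0)) := by
  have hirr : ∀ g : HahnSeries Γ ℝ, ¬ hlt g g := fun g ⟨_, h, _⟩ => lt_irrefl _ h
  have hinj : Function.Injective l := by
    intro x y h
    rcases lt_trichotomy x y with h' | h' | h'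
    · exact absurd ((hlt_iff _ _).1 h') (h ▸ hirr _)
    · exact h'
    · exact absurd ((hlt_iff _ _).1 h') (h ▸ hirr _)
  let L : {g : HahnSeries Γ ℝ // #g.support < κ} → (HahnSeries Γ ℝ → ℝ) := fun g =>
    Function.extend l (fun γ => -(g.1.coeff γ)) 0
  have hL : ∀ g γ, L g (l γ) = -(g.1.coeff γ) := fun g γ => hinj.extend_apply _ _ _
  have hL' : ∀ g h, h ∉ Set.range l → L g h = 0 := fun g h hh =>
    Function.extend_apply' _ _ _ hh
  have hsupp : ∀ g, Function.support (L g) = l '' g.1.support := by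
    intro g
    ext h
    by_cases hh : h ∈ Set.range l
    · obtain ⟨γ, rfl⟩ := hh
      rw [hinj.mem_set_image, Function.mem_support, hL, neg_ne_zero, HahnSeries.mem_support]
    · rw [Function.mem_support, hL' g h hh]
      exact ⟨fun h => absurd rfl h, fun ⟨γ, _, h⟩ => absurd ⟨γ, h⟩ hh⟩
  refine ⟨L, hL, hL', fun g => ⟨?_, ?_, ?_⟩, ?_, ?_, ?_, ?_, ?_⟩
  · rw [hsupp]
    rintro _ ⟨γ, _, rfl⟩
    exact hl γ
  · rw [hsupp, Set.wellFoundedOn_image]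
    exact Set.WellFoundedOn.mono' (fun a _ b _ h => (hlt_iff a b).2 h)
      (Set.isPWO_iff_isWF.1 g.1.isPWO_support)
  · rw [hsupp]
    exact mk_image_le.trans_lt g.2
  · intro g g' h
    refine Subtype.ext (HahnSeries.ext (funext fun γ => ?_))
    have := congrFun h (l γ)
    rw [hL, hL] at this
    exact neg_inj.1 this
  · rintro F ⟨h1, h2, h3⟩
    have himage : l '' {γ | -F (l γ) ≠ 0} ⊆ Function.support F := by
      rintro _ ⟨γ, hγ, rfl⟩
      exact neg_ne_zero.1 hγ
    have hpwo : {γ | -F (l γ) ≠ 0}.IsPWO := by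
      rw [Set.isPWO_iff_isWF]
      have := Set.wellFoundedOn_image.1 (h2.subset himage)
      exact this.mono' fun a _ b _ h => (hlt_iff a b).1 h
    refine ⟨⟨⟨fun γ => -F (l γ), hpwo⟩, ?_⟩, funext fun h => ?_⟩
    · rw [← mk_image_eq hinj]
      exact (mk_le_mk_of_subset himage).trans_lt h3
    · by_cases hh : h ∈ Set.range l
      · obtain ⟨γ, rfl⟩ := hh
        rw [hL, neg_neg]
      · rw [hL' _ h hh]
        by_contra hne
        obtain ⟨hs, hn⟩ := h1 h (Ne.symm hne)
        exact hh (hsurj h hs hn)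
  · intro g g' g'' hadd h
    by_cases hh : h ∈ Set.range l
    · obtain ⟨γ, rfl⟩ := hh
      rw [hL, hL, hL, ← hadd, HahnSeries.coeff_add]
      ring
    · rw [hL' _ h hh, hL' _ h hh, hL' _ h hh, add_zero]
  · intro g g'
    constructor
    · rintro ⟨a, ha, ha'⟩
      refine ⟨l a, by rw [hL, hL]; exact neg_lt_neg ha, fun b hb => ?_⟩
      by_cases hh : b ∈ Set.range l
      · obtain ⟨γ, rfl⟩ := hh
        rw [hL, hL, ha' γ ((hlt_iff _ _).2 hb)]
      · rw [hL' _ b hh, hL' _ b hh]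
    · rintro ⟨a, ha, ha'⟩
      by_cases hh : a ∈ Set.range l
      · obtain ⟨γ, rfl⟩ := hh
        rw [hL, hL] at ha
        refine ⟨γ, neg_lt_neg_iff.1 ha, fun b hb => ?_⟩
        have := ha' (l b) ((hlt_iff _ _).1 hb)
        rw [hL, hL] at this
        exact (neg_inj.1 this).symm
      · rw [hL' _ a hh, hL' _ a hh] at ha
        exact absurd ha (lt_irrefl _)
  · intro n g hg
    obtain ⟨γ, hγ⟩ := hsurj g.1 g.2 hg
    obtain ⟨a, ha, ha'⟩ := hg
    have hmin : ∀ b, g.1.coeff b ≠ 0 → a ≤ b := fun b hb =>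
      not_lt.1 fun h => hb (ha' b h)
    have hγa : γ < a := by
      rw [hlt_iff, hγ]
      exact hGA g.1 g.2 ⟨a, ha, ha'⟩ a ha.ne hmin
    have hzero : ∀ b ≤ γ, L g (l b) = 0 := fun b hb => by
      rw [hL, ha' b (hb.trans_lt hγa)]
      simp
    refine ⟨l γ, ?_, fun b hb => ?_⟩
    · simp only [hzero γ le_rfl, if_pos hγ, mul_zero]
      exact one_pos
    · have hb' : b ≠ g.1 := by
        rintro rfl
        exact hirr _ (hγ ▸ hb)
      simp only [hb', if_false]
      by_cases hh : b ∈ Set.range l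
      · obtain ⟨δ, rfl⟩ := hh
        rw [hzero δ ((hlt_iff _ _).2 hb).le, mul_zero]
      · rw [hL' _ b hh, mul_zero]

/-- A saturated chain, viewed as a linear order, carries the required isomorphism. -/
theorem LexChain.isGALexPower {U : Type u} {κ : Cardinal.{u}} {D : U → U → ℝ} {Γ₀ : Type u}
    [LinearOrder Γ₀] (p : LexChain κ D)
    (hp : ∀ f : U → ℝ, (∀ a, f a ≠ 0 → a ∈ p.carrier) →
      #(Function.support f) < κ → (Function.support f).WellFoundedOn p.rel →
      (∃ a, f a < 0 ∧ ∀ b, p.rel b a → f b = 0) → ∃ x ∈ p.carrier, D x = f)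
    {i : Γ₀ → U} (hi : ∀ γ, i γ ∈ p.carrier) (hi' : ∀ γ γ', γ < γ' → p.rel (i γ) (i γ')) :
    @IsGALexPower κ Γ₀ p.carrier _ p.linearOrder := by
  let _ := p.linearOrder
  have hwf : ∀ x : p.carrier, (Function.support fun a : p.carrier => D x a).IsPWO := fun x => by
    rw [Set.isPWO_iff_isWF]
    have h := (p.wf x.2).subset (Set.image_preimage_subset (Subtype.val : p.carrier → U) _)
    exact (Set.wellFoundedOn_image (f := Subtype.val) (r := p.rel)).1 h
  let l : p.carrier → HahnSeries p.carrier ℝ := fun x => ⟨fun a => D x a, hwf x⟩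
  have hl : ∀ γ, #(l γ).support < κ ∧ hlt (l γ) 0 := fun x => by
    refine ⟨(mk_preimage_of_injective (Subtype.val : p.carrier → U) _
      Subtype.val_injective).trans_lt (p.card_lt x.2), ?_⟩
    obtain ⟨a, ha, hxa, hlow⟩ := p.leading x.2
    exact ⟨⟨a, (p.mem_of_rel hxa).2⟩, ha, fun b hb => hlow b hb⟩
  have hlt_iff : ∀ γ γ', γ < γ' ↔ hlt (l γ) (l γ') := fun x y => by
    refine (p.rel_iff x.2 y.2).trans ⟨?_, ?_⟩
    · rintro ⟨a, ha, hlow⟩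
      have haS : a ∈ p.carrier :=
        mem_of_ne (fun _ => p.mem_of_code_ne x.2) (fun _ => p.mem_of_code_ne y.2) ha.ne
      exact ⟨⟨a, haS⟩, ha, fun b hb => hlow b hb⟩
    · rintro ⟨a, ha, hlow⟩
      exact ⟨a, ha, fun b hb => hlow ⟨b, (p.mem_of_rel hb).1⟩ hb⟩
  have hsurj : ∀ g : HahnSeries p.carrier ℝ, #g.support < κ → hlt g 0 → ∃ γ, l γ = g := by
    intro g hg hneg
    let f : U → ℝ := Function.extend Subtype.val g.coeff 0
    have hf : ∀ a : p.carrier, f a = g.coeff a := fun a =>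
      Subtype.val_injective.extend_apply _ _ _
    have hfS : ∀ a, f a ≠ 0 → a ∈ p.carrier := fun a ha => by
      by_contra hS
      exact ha (Function.extend_apply' _ _ _ fun ⟨b, hb⟩ => hS (hb ▸ b.2))
    have hsub : Function.support f ⊆ Subtype.val '' g.support := fun a ha =>
      ⟨⟨a, hfS a ha⟩, fun h => ha ((hf ⟨a, hfS a ha⟩).trans h), rfl⟩
    obtain ⟨x, hx, hxf⟩ := hp f hfS
      ((mk_le_mk_of_subset hsub).trans_lt (mk_image_le.trans_lt hg))
      (((Set.wellFoundedOn_image (f := Subtype.val) (r := p.rel)).2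
        (Set.isPWO_iff_isWF.1 g.isPWO_support)).subset hsub) (by
        obtain ⟨a, ha, hlow⟩ := hneg
        refine ⟨a, by rw [hf]; exact ha, fun b hb => ?_⟩
        exact (hf ⟨b, (p.mem_of_rel hb).1⟩).trans (hlow ⟨b, (p.mem_of_rel hb).1⟩ hb))
    refine ⟨⟨x, hx⟩, HahnSeries.ext (funext fun a => ?_)⟩
    exact (congrFun hxf a).trans (hf a)
  have hGA : ∀ g : HahnSeries p.carrier ℝ, #g.support < κ → hlt g 0 →
      ∀ γ₀, g.coeff γ₀ ≠ 0 → (∀ γ, g.coeff γ ≠ 0 → γ₀ ≤ γ) → hlt g (l γ₀) := by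
    intro g hg hneg γ₀ hne hmin
    obtain ⟨x, rfl⟩ := hsurj g hg hneg
    rw [← hlt_iff]
    obtain ⟨a, ha, hxa, hlow⟩ := p.leading x.2
    have haγ : γ₀ = ⟨a, (p.mem_of_rel hxa).2⟩ :=
      le_antisymm (hmin _ ha.ne) (not_lt.1 fun h => hne (hlow γ₀ h))
    rw [haγ]
    exact hxa
  exact ⟨⟨fun γ => ⟨i γ, hi γ⟩, fun γ γ' h => hi' γ γ' h⟩, l, hl, hlt_iff, hsurj, hGA,
    exists_log_of_lex_iso hl hlt_iff hsurj hGA⟩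

/-- The chain coded by `γ ↦ -t^{σ γ}` for an increasing order embedding `σ`. -/
theorem LexChain.exists_of_increasing {U : Type u} {κ : Cardinal.{u}} (hκ : ℵ₀ ≤ κ)
    {D : U → U → ℝ} {Γ₀ : Type u} [LinearOrder Γ₀] {σ : Γ₀ → Γ₀} (hmono : StrictMono σ)
    (hinc : ∀ γ, γ < σ γ) {i : Γ₀ → U} (hi : Function.Injective i)
    (hself : ∀ γ, D (i γ) (i (σ γ)) = -1) (hother : ∀ γ x, x ≠ i (σ γ) → D (i γ) x = 0) :
    ∃ p : LexChain κ D, (∀ γ, i γ ∈ p.carrier) ∧ ∀ γ γ', γ < γ' → p.rel (i γ) (i γ') := by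
  let R : U → U → Prop := fun x y => ∃ γ γ', γ < γ' ∧ i γ = x ∧ i γ' = y
  have hR : ∀ γ γ', R (i γ) (i γ') ↔ γ < γ' := fun γ γ' =>
    ⟨fun ⟨a, b, h, h1, h2⟩ => hi h1 ▸ hi h2 ▸ h, fun h => ⟨γ, γ', h, rfl, rfl⟩⟩
  have hsupp : ∀ γ, Function.support (D (i γ)) ⊆ {i (σ γ)} := fun γ x hx => by
    by_contra h
    exact hx (hother γ x h)
  have hne : ∀ γ b, R b (i (σ γ)) → b ≠ i (σ γ) := by
    rintro γ _ h rfl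
    exact lt_irrefl _ ((hR _ _).1 h)
  refine ⟨⟨Set.range i, R, ?_, ?_, ?_, ?_, ?_, ?_, ?_, ?_, ?_⟩, fun γ => ⟨γ, rfl⟩,
    fun γ γ' h => (hR _ _).2 h⟩
  · rintro x y ⟨γ, γ', -, rfl, rfl⟩
    exact ⟨⟨γ, rfl⟩, ⟨γ', rfl⟩⟩
  · rintro x ⟨γ, γ', h, rfl, h'⟩
    exact h.ne' (hi h')
  · rintro x y z ⟨γ, γ', h, rfl, rfl⟩ ⟨δ, δ', h', hδ, rfl⟩
    exact ⟨γ, δ', h.trans (hi hδ ▸ h'), rfl, rfl⟩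
  · rintro _ _ ⟨γ, rfl⟩ ⟨γ', rfl⟩
    rw [hR, hR, hi.eq_iff]
    exact lt_trichotomy γ γ'
  · rintro _ a ⟨γ, rfl⟩ ha
    exact ⟨σ γ, (hsupp γ ha).symm⟩
  · rintro _ ⟨γ, rfl⟩
    refine (mk_le_mk_of_subset (hsupp γ)).trans_lt ?_
    rw [mk_singleton]
    exact one_lt_aleph0.trans_le hκ
  · rintro _ ⟨γ, rfl⟩
    rw [Set.wellFoundedOn_iff]
    refine ⟨fun x => ⟨x, fun y hy => ?_⟩⟩
    exact absurd (hsupp γ hy.2.1) (hne γ y (hsupp γ hy.2.2 ▸ hy.1))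
  · rintro _ _ ⟨γ, rfl⟩ ⟨γ', rfl⟩
    rw [hR]
    constructor
    · intro h
      have hσ := hmono h
      refine ⟨i (σ γ), ?_, fun b hb => ?_⟩
      · rw [hself, hother γ' _ fun e => hσ.ne (hi e)]
        norm_num
      · rw [hother γ b (hne γ b hb), hother γ' b]
        rintro rfl
        exact lt_asymm hσ ((hR _ _).1 hb)
    · rintro ⟨a, ha, hlow⟩
      have ha' : a = i (σ γ) := by
        by_contra hne'
        rw [hother γ a hne'] at ha
        by_cases h : a = i (σ γ')
        · rw [h, hself] at ha
          norm_num at ha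
        · rw [hother γ' a h] at ha
          exact lt_irrefl _ ha
      subst ha'
      refine hmono.lt_iff_lt.1 (lt_of_not_ge fun h => ?_)
      rcases h.eq_or_lt with h | h
      · rw [hself, ← h, hself] at ha
        exact lt_irrefl _ ha
      · have := hlow _ ((hR _ _).2 h)
        rw [hself, hother γ _ fun e => h.ne (hi e)] at this
        norm_num at this
  · rintro _ ⟨γ, rfl⟩
    refine ⟨i (σ γ), by rw [hself]; norm_num, (hR _ _).2 (hinc γ), fun b hb => ?_⟩
    exact hother γ b (hne γ b hb)

/-- **Construction of (GA)-left logarithms from increasing automorphisms.**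
Let `κ` be regular uncountable and `Γ₀` a nonempty chain admitting an increasing
automorphism `σ₀`.  Then there are a chain `Γ ⊇ Γ₀` and an order isomorphism
`l : Γ → G^{<0}` (`G = (ℝ^Γ)_κ`) with `l(min support g) > g` for every
`g ∈ G^{<0}`; consequently `K = ℝ((G))_κ` admits a (GA)-left logarithm. -/
theorem exists_GA_left_logarithm
    (κ : Cardinal.{u}) (hreg : κ.IsRegular) (hunc : ℵ₀ < κ)
    (Γ₀ : Type u) [LinearOrder Γ₀] [Nonempty Γ₀]
    (σ₀ : Γ₀ → Γ₀) (hbij : Function.Bijective σ₀) (hmono : StrictMono σ₀)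
    (hinc : ∀ γ, γ < σ₀ γ) :
    ∃ (Γ : Type u) (li : LinearOrder Γ), @IsGALexPower κ Γ₀ Γ _ li := by
  obtain ⟨V, hV, hcard⟩ := exists_card_bounded_functions_le κ hunc.le Γ₀
  have hne : Nonempty {f : Γ₀ ⊕ V → ℝ // #(Function.support f) < κ} :=
    ⟨⟨0, by simpa using hreg.pos⟩⟩
  obtain ⟨c⟩ := hcard
  let d : V → {f : Γ₀ ⊕ V → ℝ // #(Function.support f) < κ} := Function.invFun c
  let D : Γ₀ ⊕ V → Γ₀ ⊕ V → ℝ :=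
    Sum.elim (fun γ => Pi.single (Sum.inl (σ₀ γ)) (-1)) fun v => (d v).1
  have hD : ∀ f : Γ₀ ⊕ V → ℝ, #(Function.support f) < κ → ∃ x, D x = f := fun f hf =>
    ⟨Sum.inr (c ⟨f, hf⟩), congrArg Subtype.val (Function.leftInverse_invFun c.injective ⟨f, hf⟩)⟩
  obtain ⟨p₀, hmem, hrel⟩ := LexChain.exists_of_increasing (κ := κ) (D := D) hunc.le hmono hinc
    Sum.inl_injective (fun _ => Pi.single_eq_same _ _) fun _ _ hx => Pi.single_eq_of_ne hx _
  obtain ⟨p, hext, hsat⟩ := LexChain.exists_saturated hD p₀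
  exact ⟨p.carrier, p.linearOrder, p.isGALexPower hsat (fun γ => hext.1 (hmem γ))
    fun γ γ' h => (hext.2 _ (hmem γ) _ (hmem γ')).1 (hrel γ γ' h)⟩
end

section
/- Let I be a chain and {(Γ_i, τ_i) : i ∈ I} a collection of chains each endowed with an increasing automorphism τ_i. Let Γ = Σ_{i∈I} Γ_i be the lexicographic sum and τ the automorphism of Γ with τ|_{Γ_i} = τ_i. Then τ is an increasing automorphism of Γ and the rank of (Γ, τ) equals Σ_{i∈I} rank(Γ_i, τ_i): the quotient chain Γ/∼_τ is order isomorphic to the lexicographic sum Σ_{i∈I} (Γ_i/∼_{τ_i}). -/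
/-- `QuotIso la ra lb rb` says the quotient of the chain `(A, la)` by the (convex)
equivalence relation `ra` is order isomorphic to the quotient of `(B, lb)` by `rb`. -/
def QuotIso {A B : Type*} (la ra : A → A → Prop) (lb rb : B → B → Prop) : Prop :=
  ∃ F : A → B,
    (∀ x y, ra x y ↔ rb (F x) (F y)) ∧
    (∀ x y, la x y → ¬ ra x y → lb (F x) (F y)) ∧
    (∀ b, ∃ a, rb (F a) b)

/-- The equivalence relation obtained by iterating an increasing map `f`:
`x ∼ y` iff some iterate of `f` at `x` passes `y` and vice versa. -/
def simIter {A : Type*} (le : A → A → Prop) (f : A → A) (x y : A) : Prop :=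
  ∃ n : ℕ, le y (f^[n] x) ∧ le x (f^[n] y)

/-- The strict lexicographic order on the lexicographic sum `Σ_{i∈I} Γ i`. -/
def lexLt {I : Type*} [LinearOrder I] {Γ : I → Type*} [∀ i, LinearOrder (Γ i)]
    (a b : Σ i, Γ i) : Prop :=
  a.1 < b.1 ∨ ∃ h : a.1 = b.1, h ▸ a.2 < b.2

/-- The associated non-strict order. -/
def lexLe {I : Type*} [LinearOrder I] {Γ : I → Type*} [∀ i, LinearOrder (Γ i)]
    (a b : Σ i, Γ i) : Prop :=
  lexLt a b ∨ a = b

/-- The componentwise map `Σ_{i∈I} Γ i → Σ_{i∈I} Γ i` built from maps `τ i`. -/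
def sigmaMap {I : Type*} {Γ : I → Type*} (τ : ∀ i, Γ i → Γ i) (a : Σ i, Γ i) : Σ i, Γ i :=
  ⟨a.1, τ a.1 a.2⟩

section LexSum

variable {I : Type*} {Γ : I → Type*}

lemma sigmaMap_iterate_mk (τ : ∀ i, Γ i → Γ i) (n : ℕ) (i : I) (x : Γ i) :
    (sigmaMap τ)^[n] ⟨i, x⟩ = ⟨i, (τ i)^[n] x⟩ := by
  induction n generalizing x with
  | zero => rfl
  | succ n ih => exact ih (τ i x)

lemma sigmaMap_bijective {τ : ∀ i, Γ i → Γ i} (h : ∀ i, Function.Bijective (τ i)) :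
    Function.Bijective (sigmaMap τ) :=
  ⟨Function.injective_id.sigma_map fun i => (h i).1,
    Function.surjective_id.sigma_map fun i => (h i).2⟩

variable [LinearOrder I] [∀ i, LinearOrder (Γ i)]

lemma lexLt_mk_mk_same {i : I} {x y : Γ i} :
    lexLt (⟨i, x⟩ : Σ i, Γ i) ⟨i, y⟩ ↔ x < y := by
  simp [lexLt]

lemma lexLe_mk_mk_same {i : I} {x y : Γ i} :
    lexLe (⟨i, x⟩ : Σ i, Γ i) ⟨i, y⟩ ↔ x ≤ y := by
  simp [lexLe, lexLt_mk_mk_same, le_iff_lt_or_eq]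

lemma lexLt_mk_mk_of_ne {i j : I} (hij : i ≠ j) {x : Γ i} {y : Γ j} :
    lexLt (⟨i, x⟩ : Σ i, Γ i) ⟨j, y⟩ ↔ i < j := by
  simp [lexLt, hij]

lemma lexLe.fst_le {a b : Σ i, Γ i} (h : lexLe a b) : a.1 ≤ b.1 := by
  rcases h with (h | ⟨h, -⟩) | rfl
  exacts [h.le, h.le, le_rfl]

lemma lexLt_sigmaMap_iff {τ : ∀ i, Γ i → Γ i} (h : ∀ i, StrictMono (τ i)) (a b : Σ i, Γ i) :
    lexLt (sigmaMap τ a) (sigmaMap τ b) ↔ lexLt a b := by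
  obtain ⟨i, x⟩ := a
  obtain ⟨j, y⟩ := b
  by_cases hij : i = j
  · subst hij
    simp only [sigmaMap, lexLt_mk_mk_same, (h i).lt_iff_lt]
  · simp only [sigmaMap, lexLt_mk_mk_of_ne hij]

/-- Two points of a lexicographic sum are equivalent iff they lie in the same summand and are
equivalent there. -/
lemma simIter_sigmaMap_iff (τ : ∀ i, Γ i → Γ i) (a b : Σ i, Γ i) :
    simIter lexLe (sigmaMap τ) a b ↔
      ∃ h : a.1 = b.1, simIter (· ≤ ·) (τ b.1) (h ▸ a.2) b.2 := by
  obtain ⟨i, x⟩ := a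
  obtain ⟨j, y⟩ := b
  constructor
  · rintro ⟨n, hn⟩
    rw [sigmaMap_iterate_mk, sigmaMap_iterate_mk] at hn
    obtain rfl : i = j := le_antisymm hn.2.fst_le hn.1.fst_le
    exact ⟨rfl, n, lexLe_mk_mk_same.1 hn.1, lexLe_mk_mk_same.1 hn.2⟩
  · rintro ⟨h, n, hn⟩
    obtain rfl : i = j := h
    refine ⟨n, ?_⟩
    rw [sigmaMap_iterate_mk, sigmaMap_iterate_mk]
    exact ⟨lexLe_mk_mk_same.2 hn.1, lexLe_mk_mk_same.2 hn.2⟩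

end LexSum

/-- **Additivity of the rank over lexicographic sums.**  Let `I` be a chain and
`(Γ i, τ i)` a family of chains with increasing automorphisms.  Then the
componentwise map `τ` on the lexicographic sum `Γ = Σ_{i∈I} Γ i` is an increasing
automorphism, two points are `τ`-equivalent iff they lie in the same summand and
are `τ i`-equivalent there, and consequently the quotient chain `Γ/∼_τ` is order
isomorphic to the lexicographic sum `Σ_{i∈I} (Γ i/∼_{τ i})` of the quotients. -/
theorem rank_of_lexicographic_sum
    {I : Type*} [LinearOrder I] (Γ : I → Type*) [∀ i, LinearOrder (Γ i)]
    (τ : ∀ i, Γ i → Γ i)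
    (hbij : ∀ i, Function.Bijective (τ i)) (hmono : ∀ i, StrictMono (τ i))
    (hinc : ∀ i x, x < τ i x) :
    -- τ is an increasing automorphism of the lexicographic sum
    Function.Bijective (sigmaMap τ) ∧
    (∀ a b, lexLt a b ↔ lexLt (sigmaMap τ a) (sigmaMap τ b)) ∧
    (∀ a, lexLt a (sigmaMap τ a)) ∧
    -- its equivalence classes are the classes of the summands
    (∀ a b : Σ i, Γ i, simIter lexLe (sigmaMap τ) a b ↔
      ∃ h : a.1 = b.1, simIter (· ≤ ·) (τ b.1) (h ▸ a.2) b.2) ∧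
    -- hence the rank of (Γ, τ) is the lexicographic sum of the ranks of (Γ i, τ i)
    QuotIso lexLt (simIter lexLe (sigmaMap τ)) lexLt
      (fun a b : Σ i, Γ i => ∃ h : a.1 = b.1, simIter (· ≤ ·) (τ b.1) (h ▸ a.2) b.2) := by
  exact ⟨sigmaMap_bijective hbij, fun a b => (lexLt_sigmaMap_iff hmono a b).symm,
    fun a => lexLt_mk_mk_same.2 (hinc a.1 a.2), simIter_sigmaMap_iff τ,
    id, simIter_sigmaMap_iff τ, fun _ _ h _ => h, fun b => ⟨b, rfl, 0, le_rfl, le_rfl⟩⟩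
end
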